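/- First-level reduction theorem for grading (−,−,+): let T be a representation of the graded Yang–Baxter algebra with grading (−,−,+) on H, let a₁ be a function, and let H₀ = { Φ ∈ H : A(λ)Φ = a₁(λ)Φ and C^1(λ)Φ = C^2(λ)Φ = 0 for all λ }. Fix pairwise distinct Bethe roots λ₁,…,λ_N with all occurring denominators nonzero, and let T̃(λ) be the auxiliary monodromy matrix built from them. Suppose ψ ∈ (ℂ²)^{⊗N} ⊗ H has all components ψ^{i₁…i_N} ∈ H₀ and satisfies (str T̃(λ)) ψ = Λ̃(λ) ψ for all λ, where str T̃(λ) = T̃^1_1(λ) − T̃^2_2(λ), and suppose the Bethe ansatz equations a₁(λ_j) ∏_{k≠j} a(λ_k−λ_j)/a(λ_j−λ_k) = Λ̃(λ_j) hold for j = 1,…,N. Then Φ = Σ_{i₁,…,i_N ∈ {1,2}} B_{i₁}(λ₁)⋯B_{i_N}(λ_N) ψ^{i₁…i_N} satisfies t(λ)Φ = Λ(λ)Φ, where t(λ) = −T^1_1(λ) − T^2_2(λ) + T^3_3(λ) and Λ(λ) = −a₁(λ) ∏_{j=1}^{N} 1/a(λ−λ_j) − Λ̃(λ) ∏_{j=1}^{N}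 1/a(λ_j−λ). -/

import Mathlib

open scoped BigOperators

noncomputable section

namespace Gl12

/-- The sign `(−1)^x` for `x ∈ ℤ₂`. -/
def eps (x : ZMod 2) : ℂ := if x = 0 then 1 else -1

/-- `a(λ) = λ/(λ + ic)`. -/
def af (c l : ℂ) : ℂ := l / (l + Complex.I * c)

/-- `b(λ) = ic/(λ + ic)`. -/
def bf (c l : ℂ) : ℂ := Complex.I * c / (l + Complex.I * c)

/-- The R-matrix `R_p(λ)^{αγ}_{βδ} = a(λ)(−1)^{p(α)p(γ)} δ^α_β δ^γ_δ + b(λ) δ^α_δ δ^γ_β`;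
rows are indexed by `(α, γ)` and columns by `(β, δ)`. -/
def Rmat {ι : Type*} [DecidableEq ι] (c : ℂ) (p : ι → ZMod 2) (l : ℂ) :
    Matrix (ι × ι) (ι × ι) ℂ := fun x y =>
  af c l * eps (p x.1 * p x.2) * (if x.1 = y.1 then 1 else 0) * (if x.2 = y.2 then 1 else 0)
    + bf c l * (if x.1 = y.2 then 1 else 0) * (if x.2 = y.1 then 1 else 0)

/-- `ř_p(λ)^{αγ}_{βδ} = R_p(λ)^{γα}_{βδ}`. -/
def Rcheck {ι : Type*} [DecidableEq ι] (c : ℂ) (p : ι → ZMod 2) (l : ℂ) :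
    Matrix (ι × ι) (ι × ι) ℂ := fun x y => Rmat c p l (x.2, x.1) y

/-- Super tensor product of (possibly rectangular) matrices with entries in an algebra:
`(A ⊗_p B)^{αγ}_{βδ} = (−1)^{(p(α)+p(β))p(γ)} A^α_β B^γ_δ`, where `p1` is the parity of the
row indices of `A`, `q1` the parity of the column indices of `A`, and `p2` the parity of the
row indices of `B`. -/
def stp {A : Type*} [NonUnitalNonAssocSemiring A] [Module ℂ A]
    {ι₁ ι₂ κ₁ κ₂ : Type*} (p1 : ι₁ → ZMod 2) (q1 : ι₂ → ZMod 2) (p2 : κ₁ → ZMod 2)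
    (M : Matrix ι₁ ι₂ A) (N : Matrix κ₁ κ₂ A) : Matrix (ι₁ × κ₁) (ι₂ × κ₂) A :=
  fun x y => eps ((p1 x.1 + q1 y.1) * p2 x.2) • (M x.1 y.1 * N x.2 y.2)

/-- Product of a scalar matrix with a matrix with entries in a module. -/
def cmulE {A : Type*} [AddCommMonoid A] [Module ℂ A] {ι κ μ : Type*} [Fintype κ]
    (M : Matrix ι κ ℂ) (X : Matrix κ μ A) : Matrix ι μ A :=
  fun i m => ∑ k, M i k • X k m

/-- Product of a matrix with entries in a module with a scalar matrix. -/
def emulC {A : Type*} [AddCommMonoid A] [Module ℂ A] {ι κ μ : Type*} [Fintype κ]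
    (X : Matrix ι κ A) (M : Matrix κ μ ℂ) : Matrix ι μ A :=
  fun i m => ∑ k, M k m • X i k

/-- The grading `(+,−,−)`: `p(1)=0, p(2)=p(3)=1`. -/
def gpmm : Fin 3 → ZMod 2 := ![0, 1, 1]

/-- The grading `(−,+,−)`: `p(2)=0, p(1)=p(3)=1`. -/
def gmpm : Fin 3 → ZMod 2 := ![1, 0, 1]

/-- The grading `(−,−,+)`: `p(3)=0, p(1)=p(2)=1`. -/
def gmmp : Fin 3 → ZMod 2 := ![1, 1, 0]

/-- The induced grading `g' = (+,−)`: `p'(1)=0, p'(2)=1`. -/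
def ppar : Fin 2 → ZMod 2 := ![0, 1]

/-- Trivial parity on a one-element index set (the row index of the row vector `B`). -/
def punit : Fin 1 → ZMod 2 := fun _ => 0

/-- A representation of the graded Yang–Baxter algebra with grading `p` on `H`:
`ř_p(λ−μ) (T(λ) ⊗_p T(μ)) = (T(μ) ⊗_p T(λ)) ř_p(λ−μ)` for all `λ, μ` in the domain `D`
(whenever `ř_p(λ−μ)` is defined, i.e. `λ − μ + ic ≠ 0`). -/
def IsRep {H : Type*} [AddCommGroup H] [Module ℂ H] (c : ℂ) (p : Fin 3 → ZMod 2) (D : Set ℂ)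
    (T : ℂ → Matrix (Fin 3) (Fin 3) (Module.End ℂ H)) : Prop :=
  ∀ l ∈ D, ∀ m ∈ D, l - m + Complex.I * c ≠ 0 →
    cmulE (Rcheck c p (l - m)) (stp p p p (T l) (T m)) =
      emulC (stp p p p (T m) (T l)) (Rcheck c p (l - m))

end Gl12

namespace Gl12

/-- The graded local projection operators on `(ℂⁿ)^{⊗L}` (realized as the space of functions
`(Fin L → Fin n) → ℂ`): `e_j{}_α^β = Σ_{γ₁,…,γ_{j−1}} (−1)^{(p(α)+p(β))(p(γ₁)+⋯+p(γ_{j−1}))}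
e_{γ₁}^{γ₁} ⊗ ⋯ ⊗ e_{γ_{j−1}}^{γ_{j−1}} ⊗ e_α^β ⊗ I^{⊗(L−j)}`. -/
def gradedE {n L : ℕ} (p : Fin n → ZMod 2) (j : Fin L) (α β : Fin n) :
    Matrix (Fin L → Fin n) (Fin L → Fin n) ℂ := fun σ τ =>
  if σ j = α ∧ τ j = β ∧ ∀ k, k ≠ j → σ k = τ k then
    eps ((p α + p β) * ∑ k ∈ Finset.univ.filter (fun k => k < j), p (σ k))
  else 0

end Gl12

namespace Gl12

variable {H : Type*} [AddCommGroup H] [Module ℂ H]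

/-- The component `B_i(λ)` of the row `B(λ) = (T^1_2(λ), T^1_3(λ))`. -/
def Bop (T : ℂ → Matrix (Fin 3) (Fin 3) (Module.End ℂ H)) (l : ℂ) (i : Fin 2) :
    Module.End ℂ H := T l 0 i.succ

/-- The entries `B_{i₁}(μ₁)⋯B_{i_N}(μ_N)` of the `N`-fold super tensor product of the rows
`B(μ_j)` (an ascending ordered product). -/
def BBrow {N : ℕ} (T : ℂ → Matrix (Fin 3) (Fin 3) (Module.End ℂ H)) (ms : Fin N → ℂ)
    (i : Fin N → Fin 2) : Module.End ℂ H :=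
  ((List.finRange N).map fun k => Bop T (ms k) (i k)).prod

/-- The list of spectral parameters `(λ, λ₁, …, λ̂_j, …, λ_N)` obtained by inserting `λ` in
front and deleting the `j`-th entry of `(λ₁, …, λ_N)`. -/
def insRow {N : ℕ} (l : ℂ) (ls : Fin N → ℂ) (j : Fin N) : Fin N → ℂ := fun m =>
  if hm : m.val = 0 then l
  else if m.val - 1 < j.val then ls ⟨m.val - 1, by omega⟩ else ls m

/-- Embedding of a matrix on `ℂ² ⊗ ℂ²` into the sites `(m, m+1)` (0-based) of `(ℂ²)^{⊗N}`,
i.e. `I₂^{⊗m} ⊗ M ⊗ I₂^{⊗(N−m−2)}`. -/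
def rEmb (N : ℕ) (m : ℕ) (M : Matrix (Fin 2 × Fin 2) (Fin 2 × Fin 2) ℂ) :
    Matrix (Fin N → Fin 2) (Fin N → Fin 2) ℂ := fun s t =>
  if h : m + 1 < N then
    M (s ⟨m, Nat.lt_of_succ_lt h⟩, s ⟨m + 1, h⟩) (t ⟨m, Nat.lt_of_succ_lt h⟩, t ⟨m + 1, h⟩) *
      (if ∀ k : Fin N, k.val ≠ m → k.val ≠ m + 1 → s k = t k then 1 else 0)
  else if s = t then 1 else 0

/-- The operator `S_{j−1} = (ř(λ_j−λ₁) ⊗ I₂^{⊗(N−2)}) ⋯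
(I₂^{⊗(j−2)} ⊗ ř(λ_j−λ_{j−1}) ⊗ I₂^{⊗(N−j)})` on `(ℂ²)^{⊗N}` (here `j` is 0-based). -/
def Sop (c : ℂ) {N : ℕ} (ls : Fin N → ℂ) (j : Fin N) :
    Matrix (Fin N → Fin 2) (Fin N → Fin 2) ℂ :=
  (List.finRange N).foldl
    (fun acc m => if m < j then acc * rEmb N m.val (Rcheck c ppar (ls j - ls m)) else acc) 1

/-- Right multiplication of a row of operators (identified with a map
`(ℂ²)^{⊗N} ⊗ H → H`) by a scalar matrix acting on `(ℂ²)^{⊗N}`. -/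
def rowMulC {N : ℕ} (Φ : (Fin N → Fin 2) → Module.End ℂ H)
    (M : Matrix (Fin N → Fin 2) (Fin N → Fin 2) ℂ) : (Fin N → Fin 2) → Module.End ℂ H :=
  fun t => ∑ s, M s t • Φ s

end Gl12

namespace Gl12

variable {H : Type*} [AddCommGroup H] [Module ℂ H]

/-- The elementary L-matrix `L_j^{(+−)}(λ) = a(λ) I₂ + b(λ) ((e_j{}_1^1, e_j{}_2^1),
(e_j{}_1^2, −e_j{}_2^2))`, a 2×2 matrix with entries in `End((ℂ²)^{⊗N})`. -/
def Lmat (c : ℂ) {N : ℕ} (j : Fin N) (l : ℂ) :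
    Matrix (Fin 2) (Fin 2) (Matrix (Fin N → Fin 2) (Fin N → Fin 2) ℂ) := fun α β =>
  af c l • (if α = β then (1 : Matrix (Fin N → Fin 2) (Fin N → Fin 2) ℂ) else 0)
    + (bf c l * (if α = 1 ∧ β = 1 then -1 else 1)) • gradedE ppar j β α

/-- The auxiliary spin-problem monodromy matrix
`T_{g'}(λ) = L_N^{(+−)}(λ_N − λ) ⋯ L_1^{(+−)}(λ_1 − λ)`. -/
def Tgp (c : ℂ) {N : ℕ} (ls : Fin N → ℂ) (l : ℂ) :
    Matrix (Fin 2) (Fin 2) (Matrix (Fin N → Fin 2) (Fin N → Fin 2) ℂ) :=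
  (List.finRange N).reverse.foldl (fun acc j => acc * Lmat c j (ls j - l)) 1

/-- `(σ^z)^{⊗N}` on `(ℂ²)^{⊗N}`. -/
def Zmat (N : ℕ) : Matrix (Fin N → Fin 2) (Fin N → Fin 2) ℂ := fun s t =>
  if s = t then ∏ k, (if s k = 0 then (1 : ℂ) else -1) else 0

/-- `M ⊗ f` for a scalar matrix `M` on `(ℂ²)^{⊗N}` and an operator `f` on `H`, viewed as a
matrix over `(ℂ²)^{⊗N}` with entries in `End(H)` (i.e. an operator on `(ℂ²)^{⊗N} ⊗ H`). -/
def extOp {N : ℕ} (M : Matrix (Fin N → Fin 2) (Fin N → Fin 2) ℂ) (f : Module.End ℂ H) :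
    Matrix (Fin N → Fin 2) (Fin N → Fin 2) (Module.End ℂ H) := fun s t => M s t • f

/-- The factor `𝒟_{(−,−,+)}(λ) = ((id ⊗ T^2_2(λ), (σ^z)^{⊗N} ⊗ T^2_3(λ)),
((σ^z)^{⊗N} ⊗ T^3_2(λ), id ⊗ T^3_3(λ)))`. -/
def DcalMMP (T : ℂ → Matrix (Fin 3) (Fin 3) (Module.End ℂ H)) (N : ℕ) (l : ℂ) :
    Matrix (Fin 2) (Fin 2)
      (Matrix (Fin N → Fin 2) (Fin N → Fin 2) (Module.End ℂ H)) :=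
  !![extOp 1 (T l 1 1), extOp (Zmat N) (T l 1 2);
     extOp (Zmat N) (T l 2 1), extOp 1 (T l 2 2)]

/-- The auxiliary monodromy matrix `T̃(λ) = 𝒟(λ) · (T_{g'}(λ) ⊗ id_H)` for grading
`(−,−,+)`, built from the Bethe roots `λ₁, …, λ_N`. -/
def TtilMMP (c : ℂ) (T : ℂ → Matrix (Fin 3) (Fin 3) (Module.End ℂ H)) {N : ℕ}
    (ls : Fin N → ℂ) (l : ℂ) :
    Matrix (Fin 2) (Fin 2)
      (Matrix (Fin N → Fin 2) (Fin N → Fin 2) (Module.End ℂ H)) :=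
  DcalMMP T N l * (Tgp c ls l).map (fun M => extOp M 1)

/-- The super trace `str T̃(λ) = T̃^1_1(λ) − T̃^2_2(λ)` of the auxiliary monodromy matrix. -/
def strTtilMMP (c : ℂ) (T : ℂ → Matrix (Fin 3) (Fin 3) (Module.End ℂ H)) {N : ℕ}
    (ls : Fin N → ℂ) (l : ℂ) :
    Matrix (Fin N → Fin 2) (Fin N → Fin 2) (Module.End ℂ H) :=
  TtilMMP c T ls l 0 0 - TtilMMP c T ls l 1 1

end Gl12

namespace Gl12

/-- Membership in the vacuum subspace `H₀`: `A(λ)Φ = a₁(λ)Φ` and `C(λ)Φ = 0` for all `λ`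
in the domain. -/
def memH0 {H : Type*} [AddCommGroup H] [Module ℂ H]
    (T : ℂ → Matrix (Fin 3) (Fin 3) (Module.End ℂ H)) (D : Set ℂ) (a₁ : ℂ → ℂ)
    (Φ : H) : Prop :=
  ∀ l ∈ D, T l 0 0 Φ = a₁ l • Φ ∧ T l 1 0 Φ = 0 ∧ T l 2 0 Φ = 0

/-!
Move `A(λ)` and `D(λ)` through the product of `B` operators by the exchange relations, one
factor at a time. Each produces a wanted term, in which the parameters `λ₁, …, λ_N` survive, and for
every root `λ_j` an unwanted term, in which `B(λ_j)` has been replaced by `B(λ)`. The wanted term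
of `D(λ)` is the action of `T̃(λ)` on `ψ`. The unwanted terms of `D` arise from those of `A` by
letting `T̃(λ_j)` act on `ψ`, because `T̃` at a root contains a permutation. For an eigenvector
`ψ` of `str T̃` both families are therefore proportional, and the Bethe ansatz equations are exactly
the condition that they cancel in `t(λ)Φ`.
-/

open scoped Matrix.Module

/-! ### Signs and structure functions -/

theorem eps_add (x y : ZMod 2) : eps (x + y) = eps x * eps y := by
  have parity : ∀ z : ZMod 2, z = 0 ∨ z = 1 := by decide
  rcases parity x with rfl | rfl <;> rcases parity y with rfl | rfl <;>
    simp [eps, CharTwo.add_self_eq_zero]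

theorem eps_mul_self (x : ZMod 2) : eps x * eps x = 1 := by
  rw [← eps_add, CharTwo.add_self_eq_zero, eps, if_pos rfl]

/-- The Koszul sign `(−1)^{p'(α)p'(β)}` of the grading `(+,−)`. -/
def koszul (α β : Fin 2) : ℂ := eps (ppar α * ppar β)

theorem koszul_comm (α β : Fin 2) : koszul α β = koszul β α := by
  rw [koszul, koszul, mul_comm]

theorem koszul_mul_self (α β : Fin 2) : koszul α β * koszul α β = 1 :=
  eps_mul_self _

theorem eps_add_mul (α β γ : Fin 2) :
    eps ((ppar α + ppar β) * ppar γ) = koszul α γ * koszul β γ := by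
  rw [add_mul, eps_add, koszul, koszul]

/-- `g(λ) = ic/λ`, the quotient of `b(λ)` by `a(λ)`. -/
def gf (c l : ℂ) : ℂ := Complex.I * c / l

section StructureFunctions

variable {c l m n : ℂ}

theorem ne_zero_of_af_ne_zero (h : af c l ≠ 0) : l ≠ 0 :=
  (div_ne_zero_iff.1 h).1

theorem add_ne_zero_of_af_ne_zero (h : af c l ≠ 0) : l + Complex.I * c ≠ 0 :=
  (div_ne_zero_iff.1 h).2

theorem inv_af (h : af c l ≠ 0) : (af c l)⁻¹ = 1 + gf c l := by
  have := ne_zero_of_af_ne_zero h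
  rw [af, gf, inv_div, add_div, div_self this]

theorem bf_eq_af_mul_gf (h : af c l ≠ 0) : bf c l = af c l * gf c l := by
  have := ne_zero_of_af_ne_zero h
  unfold af bf gf
  field_simp

theorem gf_sub_comm (c l m : ℂ) : gf c (l - m) = -gf c (m - l) := by
  rw [gf, gf, ← neg_sub, div_neg]

theorem gf_mul_gf (hlm : l - m ≠ 0) (hmn : m - n ≠ 0) (hln : l - n ≠ 0) :
    gf c (l - m) * gf c (m - n) = gf c (l - n) * (gf c (l - m) + gf c (m - n)) := by
  unfold gf
  field_simp
  ring

theorem af_unitarity (h : af c (l - m) ≠ 0) (h' : af c (m - l) ≠ 0) :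
    af c (l - m) * af c (m - l) + bf c (l - m) * bf c (m - l) = 1 := by
  have := add_ne_zero_of_af_ne_zero h
  have := add_ne_zero_of_af_ne_zero h'
  unfold af bf
  field_simp
  ring

theorem af_mul_bf_sub_comm (c l m : ℂ) :
    af c (l - m) * bf c (m - l) = -(bf c (l - m) * af c (m - l)) := by
  unfold af bf
  ring

/-- The points `l` and `m` are separated when neither `a(l − m)` nor `a(m − l)` vanishes. As
division by zero gives zero, this says `l − m ∉ {0, ic, −ic}`. -/
def Separated (c l m : ℂ) : Prop := af c (l - m) ≠ 0 ∧ af c (m - l) ≠ 0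

theorem Separated.sub_ne_zero (h : Separated c l m) : l - m ≠ 0 :=
  ne_zero_of_af_ne_zero h.1

end StructureFunctions

/-! ### Functions and matrices indexed by tuples -/

section Tuples

variable {ι : Type*} {N : ℕ}

theorem prod_erase_zero {M : Type*} [CommMonoid M] (f : Fin (N + 1) → M) :
    ∏ k ∈ Finset.univ.erase 0, f k = ∏ k : Fin N, f k.succ := by
  rw [← Finset.compl_singleton, ← Fin.image_succ_univ,
    Finset.prod_image (Fin.succ_injective N).injOn]

theorem prod_erase_succ {M : Type*} [CommMonoid M] (f : Fin (N + 1) → M) (j : Fin N) :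
    ∏ k ∈ Finset.univ.erase j.succ, f k = f 0 * ∏ k ∈ Finset.univ.erase j, f k.succ := by
  have hj : Finset.univ.erase j.succ =
      insert 0 ((Finset.univ.erase j).image Fin.succ) := by
    ext k
    cases k using Fin.cases <;> simp [(Fin.succ_ne_zero _).symm]
  rw [hj, Finset.prod_insert (by simp), Finset.prod_image (Fin.succ_injective N).injOn]

theorem sum_tuple_succ [Fintype ι] {M : Type*} [AddCommMonoid M]
    (f : (Fin (N + 1) → ι) → M) : ∑ i, f i = ∑ δ, ∑ i : Fin N → ι, f (Fin.cons δ i) := by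
  rw [← Fintype.sum_prod_type', ← (Fin.consEquiv fun _ => ι).sum_comp]
  rfl

/-- The block of a matrix on an `(N + 1)`-fold tensor power at position `(s₀, t₀)` of the first
tensor factor; it acts on the remaining `N` factors. -/
def firstBlock {A : Type*} [AddCommMonoid A] [Module ℂ A] (s₀ t₀ : ι) :
    Matrix (Fin (N + 1) → ι) (Fin (N + 1) → ι) A →ₗ[ℂ] Matrix (Fin N → ι) (Fin N → ι) A where
  toFun M s t := M (Fin.cons s₀ s) (Fin.cons t₀ t)
  map_add' _ _ := rfl
  map_smul' _ _ := rfl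

theorem firstBlock_apply {A : Type*} [AddCommMonoid A] [Module ℂ A] (s₀ t₀ : ι)
    (M : Matrix (Fin (N + 1) → ι) (Fin (N + 1) → ι) A) (s t : Fin N → ι) :
    firstBlock s₀ t₀ M s t = M (Fin.cons s₀ s) (Fin.cons t₀ t) :=
  rfl

theorem ext_firstBlock {A : Type*} [AddCommMonoid A] [Module ℂ A]
    {M L : Matrix (Fin (N + 1) → ι) (Fin (N + 1) → ι) A}
    (h : ∀ s₀ t₀, firstBlock s₀ t₀ M = firstBlock s₀ t₀ L) : M = L := by
  ext s t
  rw [← Fin.cons_self_tail s, ← Fin.cons_self_tail t]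
  exact congr($(h (s 0) (t 0)) (Fin.tail s) (Fin.tail t))

theorem firstBlock_one [DecidableEq ι] {A : Type*} [AddCommMonoidWithOne A] [Module ℂ A]
    (s₀ t₀ : ι) : firstBlock s₀ t₀ (1 : Matrix (Fin (N + 1) → ι) (Fin (N + 1) → ι) A) =
      if s₀ = t₀ then 1 else 0 := by
  ext s t
  by_cases h : s₀ = t₀ <;> simp [firstBlock_apply, h, Matrix.one_apply]

theorem firstBlock_mul [Fintype ι] {A : Type*} [NonUnitalNonAssocSemiring A] [Module ℂ A]
    (M L : Matrix (Fin (N + 1) → ι) (Fin (N + 1) → ι) A) (s₀ t₀ : ι) :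
    firstBlock s₀ t₀ (M * L) = ∑ u₀, firstBlock s₀ u₀ M * firstBlock u₀ t₀ L := by
  ext s t
  simp only [firstBlock_apply, Matrix.mul_apply, Matrix.sum_apply, sum_tuple_succ]

variable {H : Type*} [AddCommGroup H] [Module ℂ H]

/-- The component `ψ ↦ ψ^{δ,·}` of a tensor along the basis vector `e_δ` of its first factor. -/
def slice (δ : ι) : ((Fin (N + 1) → ι) → H) →ₗ[ℂ] (Fin N → ι) → H :=
  LinearMap.funLeft ℂ H fun i => (Fin.cons δ i : Fin (N + 1) → ι)

theorem slice_apply (δ : ι) (ψ : (Fin (N + 1) → ι) → H) (i : Fin N → ι) :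
    slice δ ψ i = ψ (Fin.cons δ i) :=
  rfl

theorem slice_smul [Fintype ι] [DecidableEq ι]
    (M : Matrix (Fin (N + 1) → ι) (Fin (N + 1) → ι) (Module.End ℂ H))
    (ψ : (Fin (N + 1) → ι) → H) (δ : ι) :
    slice δ (M • ψ) = ∑ δ', firstBlock δ δ' M • slice δ' ψ := by
  ext i
  simp only [slice_apply, Matrix.Module.smul_apply, Finset.sum_apply, firstBlock_apply,
    sum_tuple_succ]

end Tuples

/-! ### Exchange relations -/

section ExchangeRelations

variable {H : Type*} [AddCommGroup H] [Module ℂ H] {c l m : ℂ} {p : Fin 3 → ZMod 2} {D : Set ℂ}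
  {T : ℂ → Matrix (Fin 3) (Fin 3) (Module.End ℂ H)}

theorem IsRep.entry (hT : IsRep c p D T) (hl : l ∈ D) (hm : m ∈ D)
    (h : l - m + Complex.I * c ≠ 0) (α β γ δ : Fin 3) :
    (af c (l - m) * (eps (p γ * p α) * eps ((p α + p β) * p γ))) • (T l α β * T m γ δ)
        + (bf c (l - m) * eps ((p γ + p β) * p α)) • (T l γ β * T m α δ)
      = (af c (l - m) * (eps (p β * p δ) * eps ((p γ + p δ) * p α))) • (T m γ δ * T l α β)
        + (bf c (l - m) * eps ((p γ + p β) * p α)) • (T m γ β * T l α δ) := by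
  have hentry := congr($(hT l hl m hm h) (γ, α) (β, δ))
  simp only [cmulE, emulC, Rcheck, Rmat, stp, Fintype.sum_prod_type, smul_smul, add_mul, add_smul,
    Finset.sum_add_distrib, mul_ite, mul_one, mul_zero, ite_mul, zero_mul, ite_smul, zero_smul,
    Finset.sum_ite_irrel, Finset.sum_ite_eq, Finset.sum_ite_eq', Finset.mem_univ, if_true,
    Finset.sum_const_zero] at hentry
  simpa only [add_mul, mul_assoc, mul_comm (p γ) (p α), mul_comm (p δ) (p β)] using hentry

theorem IsRep.mul_eq (hT : IsRep c p D T) (hl : l ∈ D) (hm : m ∈ D)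
    (h : af c (l - m) ≠ 0) (α β γ δ : Fin 3) :
    T l α β * T m γ δ = eps ((p α + p β) * (p γ + p δ)) • (T m γ δ * T l α β)
      + (gf c (l - m) * eps (p α * p β + p α * p γ + p β * p γ)) •
        (T m γ β * T l α δ - T l γ β * T m α δ) := by
  have hentry := hT.entry hl hm (add_ne_zero_of_af_ne_zero h) α β γ δ
  have hsign : ∀ x y z w : ZMod 2, z * x + (x + y) * z = y * z ∧
      y * z + (y * w + (z + w) * x) = (x + y) * (z + w) ∧
      y * z + (z + y) * x = x * y + x * z + y * z := by decide
  obtain ⟨h₁, h₂, h₃⟩ := hsign (p α) (p β) (p γ) (p δ)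
  rw [← eps_add, h₁, bf_eq_af_mul_gf h] at hentry
  rw [← h₂, ← h₃]
  simp only [eps_add] at hentry ⊢
  have hsq := eps_mul_self (p β * p γ)
  refine smul_right_injective _ (mul_ne_zero h (left_ne_zero_of_mul_eq_one hsq)) ?_
  linear_combination (norm := module) hentry
    - (af c (l - m) * eps (p β * p δ) * eps ((p γ + p δ) * p α)) • hsq • (T m γ δ * T l α β)
    - (af c (l - m) * gf c (l - m) * eps ((p γ + p β) * p α)) • hsq •
        (T m γ β * T l α δ - T l γ β * T m α δ)

theorem gmmp_zero : gmmp 0 = 1 :=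
  rfl

theorem gmmp_succ (α : Fin 2) : gmmp α.succ = 1 + ppar α := by
  fin_cases α <;> rfl

theorem IsRep.A_mul_B (hT : IsRep c gmmp D T) (hl : l ∈ D) (hm : m ∈ D)
    (h : af c (m - l) ≠ 0) (δ : Fin 2) (v : H) :
    T l 0 0 (Bop T m δ v) = (1 + gf c (l - m)) • Bop T m δ (T l 0 0 v)
      - gf c (l - m) • Bop T l δ (T m 0 0 v) := by
  have hsign : ∀ x : ZMod 2, (1 + (1 + x)) * (1 + 1) = 0 ∧
      1 * (1 + x) + 1 * 1 + (1 + x) * 1 = 1 := by decide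
  have hmul := congr($(hT.mul_eq hm hl h 0 δ.succ 0 0) v)
  simp only [gmmp_zero, gmmp_succ, hsign, eps, one_ne_zero, if_true, if_false, one_smul,
    gf_sub_comm c m l, Module.End.mul_apply, LinearMap.add_apply, LinearMap.sub_apply,
    LinearMap.smul_apply] at hmul
  unfold Bop
  linear_combination (norm := module) -hmul

theorem IsRep.B_mul_B (hT : IsRep c gmmp D T) (hl : l ∈ D) (hm : m ∈ D)
    (h : af c (l - m) ≠ 0) (β δ : Fin 2) (v : H) :
    (1 - gf c (l - m)) • Bop T l β (Bop T m δ v) = koszul β δ • Bop T m δ (Bop T l β v)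
      - gf c (l - m) • Bop T m β (Bop T l δ v) := by
  have hsign : ∀ x y : ZMod 2, (1 + (1 + x)) * (1 + (1 + y)) = x * y ∧
      1 * (1 + x) + 1 * 1 + (1 + x) * 1 = 1 := by decide
  have hmul := congr($(hT.mul_eq hl hm h 0 β.succ 0 δ.succ) v)
  simp only [gmmp_zero, gmmp_succ, hsign (ppar β) (ppar δ), eps.eq_1 1, one_ne_zero, if_false,
    Module.End.mul_apply, LinearMap.add_apply, LinearMap.sub_apply,
    LinearMap.smul_apply] at hmul
  unfold Bop koszul
  linear_combination (norm := module) hmul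

theorem IsRep.D_mul_B (hT : IsRep c gmmp D T) (hl : l ∈ D) (hm : m ∈ D)
    (h : af c (l - m) ≠ 0) (γ β δ : Fin 2) (v : H) :
    T l γ.succ β.succ (Bop T m δ v) =
      (koszul γ δ * koszul β δ) • Bop T m δ (T l γ.succ β.succ v)
      - (gf c (l - m) * koszul γ β) • Bop T m β (T l γ.succ δ.succ v)
      + (gf c (l - m) * koszul γ β) • Bop T l β (T m γ.succ δ.succ v) := by
  have hsign : ∀ x y z : ZMod 2, (1 + x + (1 + y)) * (1 + (1 + z)) = (x + y) * z ∧
      (1 + x) * (1 + y) + (1 + x) * 1 + (1 + y) * 1 = 1 + x * y := by decide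
  have hmul := congr($(hT.mul_eq hl hm h γ.succ β.succ 0 δ.succ) v)
  simp only [gmmp_zero, gmmp_succ, hsign (ppar γ) (ppar β) (ppar δ), eps_add_mul, eps_add,
    eps.eq_1 1, one_ne_zero, if_false, Module.End.mul_apply, LinearMap.add_apply,
    LinearMap.sub_apply, LinearMap.smul_apply] at hmul
  unfold Bop
  rw [koszul.eq_1 γ β]
  linear_combination (norm := module) hmul

end ExchangeRelations

/-! ### The auxiliary monodromy matrix -/

section Monodromy

variable {c l : ℂ} {N : ℕ}

/-- The graded extension of a monodromy matrix on `(ℂ²)^{⊗N}` by one further site on the left, on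
which the extension acts diagonally through the Koszul signs. -/
def siteExtend (M : Matrix (Fin 2) (Fin 2) (Matrix (Fin N → Fin 2) (Fin N → Fin 2) ℂ)) :
    Matrix (Fin 2) (Fin 2) (Matrix (Fin (N + 1) → Fin 2) (Fin (N + 1) → Fin 2) ℂ) :=
  fun ρ κ s t => if s 0 = t 0 then
    koszul ρ (s 0) * koszul κ (s 0) * M ρ κ (Fin.tail s) (Fin.tail t) else 0

theorem firstBlock_siteExtend
    (M : Matrix (Fin 2) (Fin 2) (Matrix (Fin N → Fin 2) (Fin N → Fin 2) ℂ)) (ρ κ s₀ t₀ : Fin 2) :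
    firstBlock s₀ t₀ (siteExtend M ρ κ) =
      if s₀ = t₀ then (koszul ρ s₀ * koszul κ s₀) • M ρ κ else 0 := by
  ext s t
  by_cases h : s₀ = t₀ <;> simp [firstBlock_apply, siteExtend, h]

theorem siteExtend_one :
    siteExtend (1 : Matrix (Fin 2) (Fin 2) (Matrix (Fin N → Fin 2) (Fin N → Fin 2) ℂ)) = 1 := by
  ext1 ρ κ
  refine ext_firstBlock fun s₀ t₀ => ?_
  rw [firstBlock_siteExtend]
  by_cases h : ρ = κ
  · rw [h, koszul_mul_self, one_smul, Matrix.one_apply_eq, Matrix.one_apply_eq, firstBlock_one]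
  · rw [Matrix.one_apply_ne h, Matrix.one_apply_ne h, smul_zero, map_zero, ite_self]

theorem siteExtend_mul
    (M L : Matrix (Fin 2) (Fin 2) (Matrix (Fin N → Fin 2) (Fin N → Fin 2) ℂ)) :
    siteExtend (M * L) = siteExtend M * siteExtend L := by
  ext1 ρ κ
  refine ext_firstBlock fun s₀ t₀ => ?_
  simp only [Matrix.mul_apply, map_sum, firstBlock_mul, firstBlock_siteExtend, ite_mul, zero_mul,
    Finset.sum_ite_eq, Finset.mem_univ, if_true]
  split_ifs
  · rw [Finset.smul_sum]
    refine Finset.sum_congr rfl fun α _ => ?_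
    rw [smul_mul_smul_comm]
    congr 1
    linear_combination -koszul ρ s₀ * koszul κ s₀ * koszul_mul_self α s₀
  · simp only [mul_zero, Finset.sum_const_zero]

theorem firstBlock_gradedE_zero (α β s₀ t₀ : Fin 2) :
    firstBlock s₀ t₀ (gradedE ppar (0 : Fin (N + 1)) α β) = if s₀ = α ∧ t₀ = β then 1 else 0 := by
  ext s t
  by_cases h : s₀ = α ∧ t₀ = β <;>
    simp [firstBlock_apply, gradedE, h, Fin.forall_fin_succ, funext_iff, Matrix.one_apply, eps,
      ← and_assoc]

theorem firstBlock_gradedE_succ (j : Fin N) (α β s₀ t₀ : Fin 2) :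
    firstBlock s₀ t₀ (gradedE ppar j.succ α β) =
      if s₀ = t₀ then (koszul α s₀ * koszul β s₀) • gradedE ppar j α β else 0 := by
  ext s t
  have hsum : ∑ k with k < j.succ, ppar ((Fin.cons s₀ s : Fin (N + 1) → Fin 2) k) =
      ppar s₀ + ∑ k with k < j, ppar (s k) := by
    simp [Finset.sum_filter, Fin.sum_univ_succ]
  rcases eq_or_ne s₀ t₀ with rfl | h
  · simp [firstBlock_apply, gradedE, hsum, Fin.forall_fin_succ, mul_add, eps_add, eps_add_mul,
      (Fin.succ_ne_zero _).symm]
  · simp [firstBlock_apply, gradedE, h, Fin.forall_fin_succ, (Fin.succ_ne_zero _).symm]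

theorem Lmat_apply (j : Fin N) (α β : Fin 2) :
    Lmat c j l α β = af c l • (1 : Matrix (Fin 2) (Fin 2) _) α β +
      (bf c l * koszul α β) • gradedE ppar j β α := by
  have hsign : (if α = 1 ∧ β = 1 then -1 else 1) = koszul α β := by
    fin_cases α <;> fin_cases β <;> simp [koszul, eps, ppar]
  rw [Lmat, hsign, Matrix.one_apply]

theorem siteExtend_Lmat (j : Fin N) : siteExtend (Lmat c j l) = Lmat c j.succ l := by
  ext1 α β
  refine ext_firstBlock fun s₀ t₀ => ?_
  rw [Lmat_apply, ← siteExtend_one, map_add, map_smul, map_smul, firstBlock_gradedE_succ,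
    firstBlock_siteExtend, firstBlock_siteExtend, Lmat_apply]
  split_ifs
  · module
  · simp only [smul_zero, add_zero]

theorem Tgp_eq_prod (ls : Fin N → ℂ) :
    Tgp c ls l = ((List.finRange N).reverse.map fun j => Lmat c j (ls j - l)).prod := by
  rw [List.prod_eq_foldl, List.foldl_map, Tgp]

theorem Tgp_succ (ls : Fin (N + 1) → ℂ) :
    Tgp c ls l = siteExtend (Tgp c (Fin.tail ls) l) * Lmat c 0 (ls 0 - l) := by
  let φ : Matrix (Fin 2) (Fin 2) (Matrix (Fin N → Fin 2) (Fin N → Fin 2) ℂ) →*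
      Matrix (Fin 2) (Fin 2) (Matrix (Fin (N + 1) → Fin 2) (Fin (N + 1) → Fin 2) ℂ) :=
    ⟨⟨siteExtend, siteExtend_one⟩, siteExtend_mul⟩
  have hφ : siteExtend (Tgp c (Fin.tail ls) l) =
      ((List.finRange N).reverse.map fun j => Lmat c j.succ (ls j.succ - l)).prod := by
    change φ _ = _
    rw [Tgp_eq_prod, map_list_prod, List.map_map]
    congr 2
    ext1 j
    exact siteExtend_Lmat j
  rw [hφ, Tgp_eq_prod, List.finRange_succ, List.reverse_cons, List.map_append, List.prod_append,
    ← List.map_reverse, List.map_map, List.map_singleton, List.prod_singleton]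
  rfl

theorem firstBlock_Tgp (ls : Fin (N + 1) → ℂ) (ρ β s₀ t₀ : Fin 2) :
    firstBlock s₀ t₀ (Tgp c ls l ρ β) =
      (if s₀ = t₀ then (af c (ls 0 - l) * (koszul ρ s₀ * koszul β s₀)) •
        Tgp c (Fin.tail ls) l ρ β else 0) +
      if s₀ = β then (bf c (ls 0 - l) * koszul ρ β) • Tgp c (Fin.tail ls) l ρ t₀ else 0 := by
  simp only [Tgp_succ, Matrix.mul_apply, map_sum, firstBlock_mul, firstBlock_siteExtend, ite_mul,
    zero_mul, Finset.sum_ite_eq, Finset.mem_univ, if_true, Lmat_apply, map_add, map_smul,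
    firstBlock_gradedE_zero, mul_add, Finset.sum_add_distrib]
  congr 1
  · rw [Finset.sum_eq_single β]
    · rw [Matrix.one_apply_eq, firstBlock_one]
      split_ifs
      · rw [smul_mul_smul_comm, mul_one, mul_comm]
      · rw [smul_zero, mul_zero]
    · intro κ _ hκ
      rw [Matrix.one_apply_ne hκ, map_zero, smul_zero, mul_zero]
    · simp
  · rw [Finset.sum_eq_single t₀]
    · split_ifs with h₁ h₂ h₂
      · rw [smul_mul_smul_comm, mul_one, h₂]
        congr 1
        linear_combination bf c (ls 0 - l) * koszul ρ β * koszul_mul_self t₀ β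
      · exact absurd h₁.1 h₂
      · exact absurd ⟨h₂, rfl⟩ h₁
      · rw [smul_zero, mul_zero]
    · intro κ _ hκ
      rw [if_neg fun h => hκ h.2.symm, smul_zero, mul_zero]
    · simp

/-- The sign by which the entry `(γ, ρ)` of `𝒟` acts on the basis vector `e_s` of `(ℂ²)^{⊗N}`: it
is `1` for `γ = ρ` and the eigenvalue of `(σ^z)^{⊗N}` for `γ ≠ ρ`. -/
def stringSign (γ ρ : Fin 2) (s : Fin N → Fin 2) : ℂ :=
  ∏ k, koszul γ (s k) * koszul ρ (s k)

theorem stringSign_cons (γ ρ s₀ : Fin 2) (s : Fin N → Fin 2) :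
    stringSign γ ρ (Fin.cons s₀ s : Fin (N + 1) → Fin 2) =
      koszul γ s₀ * koszul ρ s₀ * stringSign γ ρ s :=
  Fin.prod_univ_succ _

variable {H : Type*} [AddCommGroup H] [Module ℂ H]
  {T : ℂ → Matrix (Fin 3) (Fin 3) (Module.End ℂ H)}

theorem DcalMMP_apply (γ ρ : Fin 2) (s t : Fin N → Fin 2) :
    DcalMMP T N l γ ρ s t =
      if s = t then stringSign γ ρ s • T l γ.succ ρ.succ else 0 := by
  have hsign : ∀ x, koszul 0 x * koszul 1 x = if x = 0 then 1 else -1 := by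
    intro x
    fin_cases x <;> simp [koszul, eps, ppar]
  have hsign' : ∀ x, koszul 1 x * koszul 0 x = if x = 0 then 1 else -1 := by
    intro x
    rw [mul_comm, hsign]
  fin_cases γ <;> fin_cases ρ <;>
    simp [DcalMMP, extOp, Zmat, Matrix.one_apply, stringSign, koszul_mul_self, hsign, hsign']

theorem TtilMMP_apply (ls : Fin N → ℂ) (γ β : Fin 2) (s t : Fin N → Fin 2) :
    TtilMMP c T ls l γ β s t =
      ∑ ρ, (stringSign γ ρ s * Tgp c ls l ρ β s t) • T l γ.succ ρ.succ := by
  simp only [TtilMMP, Matrix.mul_apply, Matrix.sum_apply, DcalMMP_apply, Matrix.map_apply, extOp,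
    ite_mul, zero_mul, Finset.sum_ite_eq, Finset.mem_univ, if_true, smul_mul_smul_comm, mul_one]

theorem TtilMMP_smul_zero (ls : Fin 0 → ℂ) (γ β : Fin 2) (ψ : (Fin 0 → Fin 2) → H)
    (s : Fin 0 → Fin 2) : (TtilMMP c T ls l γ β • ψ) s = T l γ.succ β.succ (ψ s) := by
  have hTgp : ∀ ρ, Tgp c ls l ρ β s s = if ρ = β then 1 else 0 := by
    intro ρ
    by_cases h : ρ = β <;> simp [Tgp, h]
  simp [Matrix.Module.smul_apply, Subsingleton.elim _ s, TtilMMP_apply,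
    stringSign, hTgp]

theorem firstBlock_TtilMMP (ls : Fin (N + 1) → ℂ) (γ β s₀ t₀ : Fin 2) :
    firstBlock s₀ t₀ (TtilMMP c T ls l γ β) =
      (if s₀ = t₀ then af c (ls 0 - l) * (koszul γ s₀ * koszul β s₀) else 0) •
        TtilMMP c T (Fin.tail ls) l γ β +
      (if s₀ = β then bf c (ls 0 - l) * koszul γ β else 0) •
        TtilMMP c T (Fin.tail ls) l γ t₀ := by
  ext1 s t
  simp only [firstBlock_apply, Matrix.add_apply, Matrix.smul_apply, TtilMMP_apply,
    stringSign_cons, Finset.smul_sum, smul_smul, ← Finset.sum_add_distrib, ← add_smul]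
  refine Finset.sum_congr rfl fun ρ _ => ?_
  rw [← firstBlock_apply s₀ t₀ (Tgp c ls l ρ β), firstBlock_Tgp]
  congr 1
  have hsq := koszul_mul_self ρ s₀
  split_ifs with _ h h <;>
    simp only [Matrix.add_apply, Matrix.smul_apply, Matrix.zero_apply, smul_eq_mul]
  · rw [h] at hsq ⊢
    linear_combination
      (af c (ls 0 - l) * koszul γ β * koszul β β * stringSign γ ρ s *
          Tgp c (Fin.tail ls) l ρ β s t +
        bf c (ls 0 - l) * koszul γ β * stringSign γ ρ s *
          Tgp c (Fin.tail ls) l ρ t₀ s t) * hsq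
  · linear_combination
      (af c (ls 0 - l) * koszul γ s₀ * koszul β s₀ * stringSign γ ρ s *
          Tgp c (Fin.tail ls) l ρ β s t) * hsq
  · rw [h] at hsq ⊢
    linear_combination
      (bf c (ls 0 - l) * koszul γ β * stringSign γ ρ s *
          Tgp c (Fin.tail ls) l ρ t₀ s t) * hsq
  · ring

theorem slice_TtilMMP_smul (ls : Fin (N + 1) → ℂ) (γ β δ : Fin 2)
    (ψ : (Fin (N + 1) → Fin 2) → H) :
    slice δ (TtilMMP c T ls l γ β • ψ) =
      (af c (ls 0 - l) * (koszul γ δ * koszul β δ)) •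
        TtilMMP c T (Fin.tail ls) l γ β • slice δ ψ +
      if δ = β then (bf c (ls 0 - l) * koszul γ β) •
        ∑ κ, TtilMMP c T (Fin.tail ls) l γ κ • slice κ ψ else 0 := by
  simp only [slice_smul, firstBlock_TtilMMP, add_smul, Finset.sum_add_distrib, ite_smul, zero_smul,
    Finset.sum_ite_eq, Finset.mem_univ, if_true, smul_assoc]
  split_ifs
  · rw [Finset.smul_sum]
  · rw [Finset.sum_const_zero]

end Monodromy

/-! ### Bethe vectors and their residues -/

section BetheVectors

variable {H : Type*} [AddCommGroup H] [Module ℂ H] {c l : ℂ} {N : ℕ}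

/-- The map `ψ ↦ Σ_i B_{i₁}(λ₁)⋯B_{i_N}(λ_N) ψ^{i₁…i_N}` producing the algebraic Bethe vectors. -/
def betheMap (T : ℂ → Matrix (Fin 3) (Fin 3) (Module.End ℂ H)) (ls : Fin N → ℂ) :
    ((Fin N → Fin 2) → H) →ₗ[ℂ] H :=
  ∑ i, BBrow T ls i ∘ₗ LinearMap.proj i

/-- The vector that `A(λ_j)` contributes to the unwanted term with `B_β(λ)` in `A(λ)Φ`, up to a
scalar: `B_β(λ_j)` is moved to the front of the product `B_{i₁}(λ₁)⋯B_{i_N}(λ_N)` by means of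
`ř(λ_j − λ_k)`, `k < j`, and stripped off. -/
def residueA (c : ℂ) (T : ℂ → Matrix (Fin 3) (Fin 3) (Module.End ℂ H)) :
    ∀ {N : ℕ}, (Fin N → ℂ) → Fin N → Fin 2 → ((Fin N → Fin 2) → H) →ₗ[ℂ] H
  | 0, _, j, _ => j.elim0
  | _ + 1, ls, j, β => Fin.cases (betheMap T (Fin.tail ls) ∘ₗ slice β)
      (fun k => ∑ δ, Bop T (ls 0) δ ∘ₗ
        ((af c (ls k.succ - ls 0) * koszul β δ) • residueA c T (Fin.tail ls) k β ∘ₗ slice δ +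
          bf c (ls k.succ - ls 0) • residueA c T (Fin.tail ls) k δ ∘ₗ slice β)) j

/-- The vector that `D(λ_j)` contributes to the unwanted term with `B_β(λ)` in `D^γ_β(λ)Φ`, up to
a scalar; it does not depend on `β`. -/
def residueD (c : ℂ) (T : ℂ → Matrix (Fin 3) (Fin 3) (Module.End ℂ H)) :
    ∀ {N : ℕ}, (Fin N → ℂ) → Fin N → Fin 2 → ((Fin N → Fin 2) → H) → H
  | 0, _, j, _, _ => j.elim0
  | _ + 1, ls, j, γ, ψ => Fin.cases
      (∑ δ, betheMap T (Fin.tail ls) (TtilMMP c T (Fin.tail ls) (ls 0) γ δ • slice δ ψ))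
      (fun k => ∑ δ, koszul γ δ • Bop T (ls 0) δ (residueD c T (Fin.tail ls) k γ (slice δ ψ))) j

variable {T : ℂ → Matrix (Fin 3) (Fin 3) (Module.End ℂ H)}

theorem betheMap_apply (ls : Fin N → ℂ) (ψ : (Fin N → Fin 2) → H) :
    betheMap T ls ψ = ∑ i, BBrow T ls i (ψ i) := by
  simp only [betheMap, LinearMap.sum_apply, LinearMap.comp_apply, LinearMap.proj_apply]

theorem betheMap_zero (ls : Fin 0 → ℂ) (ψ : (Fin 0 → Fin 2) → H) (s : Fin 0 → Fin 2) :
    betheMap T ls ψ = ψ s := by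
  rw [betheMap_apply, Fintype.sum_subsingleton _ s]
  simp [BBrow]

theorem betheMap_succ (ls : Fin (N + 1) → ℂ) (ψ : (Fin (N + 1) → Fin 2) → H) :
    betheMap T ls ψ = ∑ δ, Bop T (ls 0) δ (betheMap T (Fin.tail ls) (slice δ ψ)) := by
  have hBB : ∀ δ (i : Fin N → Fin 2), BBrow T ls (Fin.cons δ i) =
      Bop T (ls 0) δ * BBrow T (Fin.tail ls) i := fun δ i => by
    simp [BBrow, List.finRange_succ, Function.comp_def, Fin.tail]
  simp only [betheMap_apply, sum_tuple_succ, hBB, Module.End.mul_apply, map_sum, slice_apply]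

theorem residueA_zero (ls : Fin (N + 1) → ℂ) (β : Fin 2) (ψ : (Fin (N + 1) → Fin 2) → H) :
    residueA c T ls 0 β ψ = betheMap T (Fin.tail ls) (slice β ψ) :=
  rfl

theorem residueA_succ (ls : Fin (N + 1) → ℂ) (j : Fin N) (β : Fin 2)
    (ψ : (Fin (N + 1) → Fin 2) → H) :
    residueA c T ls j.succ β ψ = ∑ δ, Bop T (ls 0) δ
      ((af c (ls j.succ - ls 0) * koszul β δ) • residueA c T (Fin.tail ls) j β (slice δ ψ) +
        bf c (ls j.succ - ls 0) • residueA c T (Fin.tail ls) j δ (slice β ψ)) := by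
  simp only [residueA, Fin.cases_succ, LinearMap.sum_apply, LinearMap.comp_apply,
    LinearMap.add_apply, LinearMap.smul_apply]

theorem residueD_zero (ls : Fin (N + 1) → ℂ) (γ : Fin 2) (ψ : (Fin (N + 1) → Fin 2) → H) :
    residueD c T ls 0 γ ψ =
      ∑ δ, betheMap T (Fin.tail ls) (TtilMMP c T (Fin.tail ls) (ls 0) γ δ • slice δ ψ) :=
  rfl

theorem residueD_succ (ls : Fin (N + 1) → ℂ) (j : Fin N) (γ : Fin 2)
    (ψ : (Fin (N + 1) → Fin 2) → H) :
    residueD c T ls j.succ γ ψ =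
      ∑ δ, koszul γ δ • Bop T (ls 0) δ (residueD c T (Fin.tail ls) j γ (slice δ ψ)) :=
  rfl

theorem betheMap_TtilMMP_smul (ls : Fin (N + 1) → ℂ) (h : af c (ls 0 - l) ≠ 0) (γ β : Fin 2)
    (ψ : (Fin (N + 1) → Fin 2) → H) :
    betheMap T ls (TtilMMP c T ls l γ β • ψ) = af c (ls 0 - l) • ∑ δ,
      ((koszul γ δ * koszul β δ) • Bop T (ls 0) δ
          (betheMap T (Fin.tail ls) (TtilMMP c T (Fin.tail ls) l γ β • slice δ ψ)) -
        (gf c (l - ls 0) * koszul γ β) • Bop T (ls 0) β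
          (betheMap T (Fin.tail ls) (TtilMMP c T (Fin.tail ls) l γ δ • slice δ ψ))) := by
  simp only [betheMap_succ, slice_TtilMMP_smul, map_add, map_smul, apply_ite (betheMap T _),
    apply_ite (Bop T (ls 0) _), map_zero, map_sum, Finset.sum_add_distrib, Finset.sum_ite_eq',
    Finset.mem_univ, if_true, smul_add, Finset.smul_sum, smul_smul, bf_eq_af_mul_gf h,
    gf_sub_comm c l, neg_mul, neg_smul, sub_neg_eq_add, mul_assoc]

theorem af_zero : af c 0 = 0 :=
  zero_div _

theorem bf_zero (hc : c ≠ 0) : bf c 0 = 1 := by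
  rw [bf, zero_add, div_self (mul_ne_zero Complex.I_ne_zero hc)]

/- Unitarity `ř(λ − μ) ř(μ − λ) = 1`, with the signs and in the components in which it acts on the
residues. -/
theorem exchange_unitarity {m : ℂ} (h : Separated c l m) (Z : Fin 2 → H) (γ β β' δ : Fin 2) :
    (af c (l - m) * koszul β' δ) •
        ((if β' = β then (af c (m - l) * (koszul γ δ * koszul β δ) * koszul γ β) • Z δ else 0) +
          if δ = β then (bf c (m - l) * koszul γ β * koszul γ β') • Z β' else 0) +
      bf c (l - m) •
        ((if δ = β then (af c (m - l) * (koszul γ β' * koszul β β') * koszul γ β) • Z β' else 0) +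
          if β' = β then (bf c (m - l) * koszul γ β * koszul γ δ) • Z δ else 0) =
      if β' = β then (koszul γ β * koszul γ δ) • Z δ else 0 := by
  have hunit := af_unitarity h.1 h.2
  have hcross := af_mul_bf_sub_comm c l m
  have hsq := koszul_mul_self β δ
  by_cases hβ : β' = β <;> by_cases hδ : δ = β <;> simp only [hβ, hδ, if_true, if_false]
  · rw [hδ] at hsq
    linear_combination (norm := module) (koszul γ β * koszul γ β) • hunit • Z β +
      (koszul γ β * koszul γ β * koszul β β) • hcross • Z β +
      (koszul γ β * koszul γ β * (af c (l - m) * af c (m - l))) • hsq • Z β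
  · linear_combination (norm := module) (koszul γ β * koszul γ δ) • hunit • Z δ +
      (koszul γ β * koszul γ δ * (af c (l - m) * af c (m - l))) • hsq • Z δ
  · rw [koszul_comm β' β]
    linear_combination (norm := module)
      (koszul γ β * koszul γ β' * koszul β β') • hcross • Z β'
  · simp only [zero_add, smul_zero]

/- At `λ = λ_j` the `j`-th factor of the monodromy matrix is `L_j(0)`, a graded permutation because
`a(0) = 0` and `b(0) = 1`; unitarity removes the exchanges by which `B(λ_j)` came to the front. -/
theorem residueA_TtilMMP_smul (hc : c ≠ 0) (ls : Fin N → ℂ)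
    (hsep : ∀ j k, j ≠ k → Separated c (ls j) (ls k)) (j : Fin N) (γ β β' : Fin 2)
    (ψ : (Fin N → Fin 2) → H) :
    residueA c T ls j β' (TtilMMP c T ls (ls j) γ β • ψ) =
      if β' = β then koszul γ β • residueD c T ls j γ ψ else 0 := by
  induction N generalizing β β' with
  | zero => exact j.elim0
  | succ N ih =>
    cases j using Fin.cases with
    | zero =>
      rw [residueA_zero, residueD_zero, slice_TtilMMP_smul, sub_self, af_zero, bf_zero hc,
        zero_mul, zero_smul, zero_add, one_mul]
      split_ifs
      · rw [map_smul, map_sum]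
      · rw [map_zero]
    | succ j =>
      have ihj : ∀ α κ χ, residueA c T (Fin.tail ls) j α
          (TtilMMP c T (Fin.tail ls) (ls j.succ) γ κ • χ) =
            if α = κ then koszul γ κ • residueD c T (Fin.tail ls) j γ χ else 0 := fun α κ χ =>
        ih (Fin.tail ls) (fun j k h => hsep j.succ k.succ ((Fin.succ_injective N).ne h)) j κ α χ
      have hslice : ∀ δ α, residueA c T (Fin.tail ls) j α
          (slice δ (TtilMMP c T ls (ls j.succ) γ β • ψ)) =
            (if α = β then (af c (ls 0 - ls j.succ) * (koszul γ δ * koszul β δ) * koszul γ β) •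
              residueD c T (Fin.tail ls) j γ (slice δ ψ) else 0) +
            if δ = β then (bf c (ls 0 - ls j.succ) * koszul γ β * koszul γ α) •
              residueD c T (Fin.tail ls) j γ (slice α ψ) else 0 := fun δ α => by
        rw [slice_TtilMMP_smul, map_add, map_smul, ihj, apply_ite (residueA c T _ j α), map_zero,
          map_smul, map_sum, Finset.sum_congr rfl fun κ _ => ihj α κ (slice κ ψ),
          Finset.sum_ite_eq, if_pos (Finset.mem_univ α), smul_ite, smul_zero, smul_smul, smul_smul]
      rw [residueA_succ, residueD_succ]
      simp only [hslice, exchange_unitarity (hsep j.succ 0 (Fin.succ_ne_zero j)) fun α =>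
        residueD c T (Fin.tail ls) j γ (slice α ψ)]
      split_ifs
      · simp only [map_smul, Finset.smul_sum, smul_smul]
      · simp only [map_zero, Finset.sum_const_zero]

end BetheVectors

/-! ### Action of the diagonal blocks on Bethe vectors -/

section BetheAction

variable {H : Type*} [AddCommGroup H] [Module ℂ H] {c l m n : ℂ} {D : Set ℂ} {N : ℕ}
  {T : ℂ → Matrix (Fin 3) (Fin 3) (Module.End ℂ H)}

theorem IsRep.B_mul_B_merge (hT : IsRep c gmmp D T) (hl : l ∈ D) (hm : m ∈ D)
    (hlm : Separated c l m) (hmn : Separated c m n) (hln : Separated c l n) (β δ : Fin 2) (v : H) :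
    (koszul β δ * gf c (l - n)) • Bop T m δ (Bop T l β v)
      - (gf c (l - m) * gf c (l - n)) • Bop T m β (Bop T l δ v)
      + (gf c (l - m) * gf c (m - n)) • Bop T l β (Bop T m δ v) =
    (gf c (l - n) * (af c (m - n))⁻¹) • Bop T l β (Bop T m δ v) := by
  have hB := hT.B_mul_B hl hm hlm.1 β δ v
  have hg := gf_mul_gf (c := c) hlm.sub_ne_zero hmn.sub_ne_zero hln.sub_ne_zero
  rw [inv_af hmn.1]
  linear_combination (norm := module) hg • Bop T l β (Bop T m δ v) - gf c (l - n) • hB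

/- Moving `D(λ)` through one more `B(μ)` preserves the shape "wanted term plus one unwanted term per
root `ν_j`". -/
theorem IsRep.D_Bop_of_D (hT : IsRep c gmmp D T) (hl : l ∈ D) (hm : m ∈ D) (hlm : Separated c l m)
    {ns : Fin N → ℂ} (hln : ∀ j, Separated c l (ns j)) (hmn : ∀ j, Separated c m (ns j))
    {γ : Fin 2} {v : H} {P Q : ℂ} {p : Fin N → ℂ} {X Y : Fin 2 → H} {Z : Fin N → H}
    (hDl : ∀ β, T l γ.succ β.succ v =
      P • X β + ∑ j, (gf c (l - ns j) * koszul γ β * p j) • Bop T l β (Z j))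
    (hDm : ∀ β, T m γ.succ β.succ v =
      Q • Y β + ∑ j, (gf c (m - ns j) * koszul γ β * p j) • Bop T m β (Z j)) (β δ : Fin 2) :
    T l γ.succ β.succ (Bop T m δ v) =
      P • ((koszul γ δ * koszul β δ) • Bop T m δ (X β) -
          (gf c (l - m) * koszul γ β) • Bop T m β (X δ)) +
        ((gf c (l - m) * koszul γ β * Q) • Bop T l β (Y δ) +
          ∑ j, (gf c (l - ns j) * koszul γ β * ((af c (m - ns j))⁻¹ * p j)) •
            Bop T l β (koszul γ δ • Bop T m δ (Z j))) := by
  have hmerge : (koszul γ δ * koszul β δ) •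
        ∑ j, (gf c (l - ns j) * koszul γ β * p j) • Bop T m δ (Bop T l β (Z j)) -
      (gf c (l - m) * koszul γ β) •
        ∑ j, (gf c (l - ns j) * koszul γ δ * p j) • Bop T m β (Bop T l δ (Z j)) +
      (gf c (l - m) * koszul γ β) •
        ∑ j, (gf c (m - ns j) * koszul γ δ * p j) • Bop T l β (Bop T m δ (Z j)) =
      ∑ j, (gf c (l - ns j) * koszul γ β * ((af c (m - ns j))⁻¹ * p j)) •
        Bop T l β (koszul γ δ • Bop T m δ (Z j)) := by
    simp only [Finset.smul_sum, ← Finset.sum_sub_distrib, ← Finset.sum_add_distrib]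
    refine Finset.sum_congr rfl fun j _ => ?_
    rw [map_smul]
    linear_combination (norm := module) (koszul γ β * koszul γ δ * p j) •
      hT.B_mul_B_merge hl hm hlm (hmn j) (hln j) β δ (Z j)
  rw [hT.D_mul_B hl hm hlm.1, hDl, hDl, hDm, ← hmerge]
  simp only [map_add, map_sum, map_smul]
  module

theorem IsRep.D_betheMap (hT : IsRep c gmmp D T) (hl : l ∈ D) (ls : Fin N → ℂ)
    (hls : ∀ j, ls j ∈ D) (hsep : ∀ j k, j ≠ k → Separated c (ls j) (ls k))
    (hlsep : ∀ j, Separated c l (ls j)) (γ β : Fin 2) (ψ : (Fin N → Fin 2) → H) :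
    T l γ.succ β.succ (betheMap T ls ψ) =
      (∏ j, (af c (ls j - l))⁻¹) • betheMap T ls (TtilMMP c T ls l γ β • ψ) +
        ∑ j, (gf c (l - ls j) * koszul γ β * ∏ k ∈ Finset.univ.erase j, (af c (ls k - ls j))⁻¹) •
          Bop T l β (residueD c T ls j γ ψ) := by
  induction N generalizing l β with
  | zero =>
    rw [betheMap_zero ls ψ Fin.elim0, betheMap_zero ls _ Fin.elim0, TtilMMP_smul_zero]
    simp
  | succ N ih =>
    have hsep₀ : ∀ j : Fin N, Separated c (ls 0) (ls j.succ) :=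
      fun j => hsep 0 j.succ (Fin.succ_ne_zero j).symm
    have ih_tail := fun {l} (hl : l ∈ D) (hlsep : ∀ j : Fin N, Separated c l (ls j.succ)) δ β =>
      ih hl (Fin.tail ls) (fun j => hls j.succ)
        (fun j k h => hsep j.succ k.succ ((Fin.succ_injective N).ne h)) hlsep β (slice δ ψ)
    have hexchange := fun δ => hT.D_Bop_of_D hl (hls 0) (hlsep 0) (fun j => hlsep j.succ) hsep₀
      (ih_tail hl (fun j => hlsep j.succ) δ) (ih_tail (hls 0) hsep₀ δ) β δ
    have hprod : (∏ j, (af c (ls j - l))⁻¹) * af c (ls 0 - l) =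
        ∏ j, (af c (Fin.tail ls j - l))⁻¹ := by
      rw [Fin.prod_univ_succ, mul_right_comm, inv_mul_cancel₀ (hlsep 0).2, one_mul]
      rfl
    rw [betheMap_succ ls ψ, map_sum, Finset.sum_congr rfl fun δ _ => hexchange δ,
      Finset.sum_add_distrib, Finset.sum_add_distrib, ← Finset.smul_sum,
      betheMap_TtilMMP_smul ls (hlsep 0).2, smul_smul, hprod, Finset.sum_comm]
    congr 1
    simp only [Fin.sum_univ_succ (n := N), residueD_zero, residueD_succ, prod_erase_zero,
      prod_erase_succ, map_sum, Finset.smul_sum]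
    rfl

theorem IsRep.sum_B_mul_B_merge (hT : IsRep c gmmp D T) (hl : l ∈ D) (hm : m ∈ D)
    (hlm : Separated c l m) (hmn : Separated c m n) (hln : Separated c l n)
    (Z : Fin 2 → Fin 2 → H) :
    ((af c (l - m))⁻¹ * gf c (l - n)) • ∑ δ, Bop T m δ (∑ β, Bop T l β (Z β δ)) -
      (gf c (l - m) * gf c (m - n)) • ∑ δ, Bop T l δ (∑ β, Bop T m β (Z β δ)) =
    (gf c (l - n) * (af c (n - m))⁻¹) • ∑ β, Bop T l β (∑ δ, Bop T m δ
      ((af c (n - m) * koszul β δ) • Z β δ + bf c (n - m) • Z δ β)) := by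
  have hg := gf_mul_gf (c := c) hlm.sub_ne_zero hmn.sub_ne_zero hln.sub_ne_zero
  have hB : ∀ β δ, (af c (l - m))⁻¹ • Bop T m δ (Bop T l β (Z β δ)) =
      koszul β δ • Bop T l β (Bop T m δ (Z β δ)) +
        gf c (l - m) • Bop T l δ (Bop T m β (Z β δ)) := fun β δ => by
    have h := hT.B_mul_B hm hl hlm.2 δ β (Z β δ)
    rw [gf_sub_comm c m l, koszul_comm δ β] at h
    rw [inv_af hlm.1]
    linear_combination (norm := module) h
  have hreorder : (af c (l - m))⁻¹ • ∑ δ, Bop T m δ (∑ β, Bop T l β (Z β δ)) =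
      ∑ β, Bop T l β (∑ δ, koszul β δ • Bop T m δ (Z β δ)) +
        gf c (l - m) • ∑ δ, Bop T l δ (∑ β, Bop T m β (Z β δ)) := by
    simp only [map_sum, Finset.smul_sum, hB, Finset.sum_add_distrib, map_smul]
    rw [Finset.sum_comm]
  have hexpand : (af c (n - m))⁻¹ • ∑ β, Bop T l β (∑ δ, Bop T m δ
        ((af c (n - m) * koszul β δ) • Z β δ + bf c (n - m) • Z δ β)) =
      ∑ β, Bop T l β (∑ δ, koszul β δ • Bop T m δ (Z β δ)) -
        gf c (m - n) • ∑ δ, Bop T l δ (∑ β, Bop T m β (Z β δ)) := by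
    rw [inv_smul_eq_iff₀ hmn.2, bf_eq_af_mul_gf hmn.2, gf_sub_comm c n m]
    simp only [map_add, map_smul, Finset.sum_add_distrib, mul_smul, ← Finset.smul_sum]
    module
  linear_combination (norm := module) gf c (l - n) • hreorder - gf c (l - n) • hexpand -
    hg • ∑ δ, Bop T l δ (∑ β, Bop T m β (Z β δ))

theorem IsRep.A_sum_Bop_of_A (hT : IsRep c gmmp D T) (hl : l ∈ D) (hm : m ∈ D)
    (hlm : Separated c l m) {ns : Fin N → ℂ} (hln : ∀ j, Separated c l (ns j))
    (hmn : ∀ j, Separated c m (ns j)) {v : Fin 2 → H} {P Q : ℂ} {p : Fin N → ℂ}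
    {Z : Fin N → Fin 2 → Fin 2 → H}
    (hAl : ∀ δ, T l 0 0 (v δ) =
      P • v δ - ∑ j, (gf c (l - ns j) * p j) • ∑ β, Bop T l β (Z j β δ))
    (hAm : ∀ δ, T m 0 0 (v δ) =
      Q • v δ - ∑ j, (gf c (m - ns j) * p j) • ∑ β, Bop T m β (Z j β δ)) :
    T l 0 0 (∑ δ, Bop T m δ (v δ)) =
      ((af c (l - m))⁻¹ * P) • ∑ δ, Bop T m δ (v δ) -
        ((gf c (l - m) * Q) • ∑ δ, Bop T l δ (v δ) +
          ∑ j, (gf c (l - ns j) * ((af c (ns j - m))⁻¹ * p j)) • ∑ β, Bop T l β (∑ δ, Bop T m δ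
            ((af c (ns j - m) * koszul β δ) • Z j β δ + bf c (ns j - m) • Z j δ β))) := by
  have hmerge := fun j => hT.sum_B_mul_B_merge hl hm hlm (hmn j) (hln j) (Z j)
  have hswap : ∀ j, (gf c (l - ns j) * ((af c (ns j - m))⁻¹ * p j)) •
        ∑ β, Bop T l β (∑ δ, Bop T m δ
          ((af c (ns j - m) * koszul β δ) • Z j β δ + bf c (ns j - m) • Z j δ β)) =
      (af c (l - m))⁻¹ • ∑ δ, Bop T m δ ((gf c (l - ns j) * p j) • ∑ β, Bop T l β (Z j β δ)) -
      gf c (l - m) • ∑ δ, Bop T l δ ((gf c (m - ns j) * p j) • ∑ β, Bop T m β (Z j β δ)) :=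
    fun j => by
      simp only [map_smul, ← Finset.smul_sum]
      linear_combination (norm := module) -p j • hmerge j
  rw [Finset.sum_congr rfl fun j _ => hswap j, Finset.sum_sub_distrib, ← Finset.smul_sum,
    ← Finset.smul_sum, Finset.sum_comm (s := (Finset.univ : Finset (Fin N))),
    Finset.sum_comm (s := (Finset.univ : Finset (Fin N)))]
  simp only [map_sum, hT.A_mul_B hl hm hlm.2, ← inv_af hlm.1, hAl, hAm, map_sub, map_smul,
    smul_sub, Finset.sum_sub_distrib, ← Finset.smul_sum]
  module

theorem IsRep.A_betheMap (hT : IsRep c gmmp D T) (hl : l ∈ D) (ls : Fin N → ℂ)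
    (hls : ∀ j, ls j ∈ D) (hsep : ∀ j k, j ≠ k → Separated c (ls j) (ls k))
    (hlsep : ∀ j, Separated c l (ls j)) {a₁ : ℂ → ℂ} (ψ : (Fin N → Fin 2) → H)
    (hψ : ∀ i, ∀ x ∈ D, T x 0 0 (ψ i) = a₁ x • ψ i) :
    T l 0 0 (betheMap T ls ψ) =
      (a₁ l * ∏ j, (af c (l - ls j))⁻¹) • betheMap T ls ψ -
        ∑ j, (gf c (l - ls j) *
          (a₁ (ls j) * ∏ k ∈ Finset.univ.erase j, (af c (ls j - ls k))⁻¹)) •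
            ∑ β, Bop T l β (residueA c T ls j β ψ) := by
  induction N generalizing l with
  | zero =>
    rw [betheMap_zero ls ψ Fin.elim0, hψ _ l hl]
    simp
  | succ N ih =>
    have hsep₀ : ∀ j : Fin N, Separated c (ls 0) (ls j.succ) :=
      fun j => hsep 0 j.succ (Fin.succ_ne_zero j).symm
    have ih_tail := fun {l} (hl : l ∈ D) (hlsep : ∀ j : Fin N, Separated c l (ls j.succ)) δ =>
      ih hl (Fin.tail ls) (fun j => hls j.succ)
        (fun j k h => hsep j.succ k.succ ((Fin.succ_injective N).ne h)) hlsep (slice δ ψ)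
        fun i => hψ (Fin.cons δ i)
    rw [betheMap_succ ls ψ, hT.A_sum_Bop_of_A hl (hls 0) (hlsep 0) (fun j => hlsep j.succ) hsep₀
      (ih_tail hl fun j => hlsep j.succ) (ih_tail (hls 0) hsep₀)]
    simp only [Fin.sum_univ_succ (n := N), Fin.prod_univ_succ, residueA_zero, residueA_succ,
      prod_erase_zero, prod_erase_succ, mul_left_comm (a₁ _)]
    rfl

end BetheAction

/-! ### Cancellation of the unwanted terms -/

section Eigenvectors

variable {H : Type*} [AddCommGroup H] [Module ℂ H] {c l : ℂ} {D : Set ℂ} {N : ℕ}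
  {T : ℂ → Matrix (Fin 3) (Fin 3) (Module.End ℂ H)}

theorem residueD_eq_smul_residueA (hc : c ≠ 0) (ls : Fin N → ℂ)
    (hsep : ∀ j k, j ≠ k → Separated c (ls j) (ls k)) (j : Fin N) {Λ : ℂ}
    {ψ : (Fin N → Fin 2) → H} (hψ : strTtilMMP c T ls (ls j) • ψ = Λ • ψ) (γ : Fin 2) :
    residueD c T ls j γ ψ = Λ • residueA c T ls j γ ψ := by
  have h := congr(residueA c T ls j γ $hψ)
  rw [strTtilMMP, sub_smul, map_sub, map_smul _ Λ, residueA_TtilMMP_smul hc ls hsep,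
    residueA_TtilMMP_smul hc ls hsep] at h
  rw [← h]
  fin_cases γ <;> simp [koszul, ppar, eps]

theorem IsRep.str_D_betheMap (hT : IsRep c gmmp D T) (hc : c ≠ 0) (hl : l ∈ D) (ls : Fin N → ℂ)
    (hls : ∀ j, ls j ∈ D) (hsep : ∀ j k, j ≠ k → Separated c (ls j) (ls k))
    (hlsep : ∀ j, Separated c l (ls j)) {Λ : ℂ → ℂ} (ψ : (Fin N → Fin 2) → H)
    (hψ : ∀ x ∈ D, strTtilMMP c T ls x • ψ = Λ x • ψ) :
    T l 1 1 (betheMap T ls ψ) - T l 2 2 (betheMap T ls ψ) =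
      (Λ l * ∏ j, (af c (ls j - l))⁻¹) • betheMap T ls ψ +
        ∑ j, (gf c (l - ls j) *
          (Λ (ls j) * ∏ k ∈ Finset.univ.erase j, (af c (ls k - ls j))⁻¹)) •
            ∑ β, Bop T l β (residueA c T ls j β ψ) := by
  have hwanted := congr(betheMap T ls $(hψ l hl))
  rw [strTtilMMP, sub_smul, map_sub, map_smul _ (Λ l)] at hwanted
  have hunwanted := fun j => residueD_eq_smul_residueA hc ls hsep j (hψ (ls j) (hls j))
  have hD := hT.D_betheMap hl ls hls hsep hlsep
  have h₀ : koszul 0 0 = 1 := by simp [koszul, ppar, eps]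
  have h₁ : koszul 1 1 = -1 := by simp [koszul, ppar, eps]
  have hD₀ := hD 0 0 ψ
  have hD₁ := hD 1 1 ψ
  simp only [h₀, h₁, hunwanted, Fin.succ_zero_eq_one, Fin.succ_one_eq_two] at hD₀ hD₁
  rw [hD₀, hD₁, add_sub_add_comm, ← smul_sub, hwanted, smul_smul, mul_comm (Λ l),
    ← Finset.sum_sub_distrib]
  congr 1
  refine Finset.sum_congr rfl fun j _ => ?_
  rw [Fin.sum_univ_two, map_smul, map_smul]
  module

theorem bethe_equation_iff (ls : Fin N → ℂ) (ha : ∀ j k, j ≠ k → af c (ls j - ls k) ≠ 0)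
    (j : Fin N) (a Λ : ℂ) :
    a * ∏ k ∈ Finset.univ.erase j, (af c (ls k - ls j) * (af c (ls j - ls k))⁻¹) = Λ ↔
      a * ∏ k ∈ Finset.univ.erase j, (af c (ls j - ls k))⁻¹ =
        Λ * ∏ k ∈ Finset.univ.erase j, (af c (ls k - ls j))⁻¹ := by
  have hprod : ∏ k ∈ Finset.univ.erase j, af c (ls k - ls j) ≠ 0 :=
    Finset.prod_ne_zero_iff.2 fun k hk => ha k j (Finset.ne_of_mem_erase hk)
  rw [Finset.prod_mul_distrib, Finset.prod_inv_distrib (fun k => af c (ls k - ls j)),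
    eq_mul_inv_iff_mul_eq₀ hprod, mul_right_comm, mul_assoc]

end Eigenvectors

theorem first_level_reduction_general (c : ℂ) (hc : c ≠ 0) {H : Type*} [AddCommGroup H]
    [Module ℂ H] (D : Set ℂ) (T : ℂ → Matrix (Fin 3) (Fin 3) (Module.End ℂ H))
    (hT : IsRep c gmmp D T) (a₁ Λt : ℂ → ℂ) {N : ℕ} (ls : Fin N → ℂ)
    (hls : ∀ j, ls j ∈ D) (ha2 : ∀ j k, j ≠ k → af c (ls j - ls k) ≠ 0)
    (ψ : (Fin N → Fin 2) → H)
    (hψA : ∀ i, ∀ l ∈ D, T l 0 0 (ψ i) = a₁ l • ψ i)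
    (hψ : ∀ l ∈ D, ∀ s, (∑ t, strTtilMMP c T ls l s t (ψ t)) = Λt l • ψ s)
    (hbae : ∀ j, a₁ (ls j) *
        ∏ k ∈ Finset.univ.erase j, (af c (ls k - ls j) * (af c (ls j - ls k))⁻¹)
      = Λt (ls j)) :
    ∀ l ∈ D, (∀ j, af c (l - ls j) ≠ 0) → (∀ j, af c (ls j - l) ≠ 0) →
      (-(T l 0 0) - T l 1 1 + T l 2 2) (∑ i, BBrow T ls i (ψ i))
        = (-(a₁ l) * ∏ j, (af c (l - ls j))⁻¹
            - Λt l * ∏ j, (af c (ls j - l))⁻¹) • ∑ i, BBrow T ls i (ψ i) := by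
  intro l hl hal hla
  have hsep : ∀ j k, j ≠ k → Separated c (ls j) (ls k) :=
    fun j k h => ⟨ha2 j k h, ha2 k j h.symm⟩
  have hlsep : ∀ j, Separated c l (ls j) := fun j => ⟨hal j, hla j⟩
  have hstr : ∀ x ∈ D, strTtilMMP c T ls x • ψ = Λt x • ψ := fun x hx => by
    ext s
    rw [Matrix.Module.smul_apply, Pi.smul_apply, ← hψ x hx s]
    rfl
  have hA := hT.A_betheMap hl ls hls hsep hlsep ψ hψA
  have hD := hT.str_D_betheMap hc hl ls hls hsep hlsep ψ hstr
  simp only [← (bethe_equation_iff ls ha2 _ _ _).1 (hbae _)] at hD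
  rw [← betheMap_apply, LinearMap.add_apply, LinearMap.sub_apply, LinearMap.neg_apply]
  linear_combination (norm := module) -hA - hD

/-- First-level reduction theorem for grading `(−,−,+)`: if all components
of `ψ` lie in the vacuum subspace `H₀`, `ψ` is an eigenvector of `str T̃(λ)` with eigenvalue
`Λ̃(λ)`, and the Bethe ansatz equations
`a₁(λ_j) ∏_{k≠j} a(λ_k−λ_j)/a(λ_j−λ_k) = Λ̃(λ_j)` hold, then
`Φ = Σ_i B_{i₁}(λ₁)⋯B_{i_N}(λ_N) ψ^{i₁…i_N}` satisfies `t(λ)Φ = Λ(λ)Φ` with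
`t(λ) = −T^1_1(λ) − T^2_2(λ) + T^3_3(λ)` and
`Λ(λ) = −a₁(λ) ∏_j 1/a(λ−λ_j) − Λ̃(λ) ∏_j 1/a(λ_j−λ)`. -/
theorem first_level_reduction (c : ℂ) (hc : c ≠ 0) {H : Type*} [AddCommGroup H]
    [Module ℂ H] (D : Set ℂ) (T : ℂ → Matrix (Fin 3) (Fin 3) (Module.End ℂ H))
    (hT : IsRep c gmmp D T) (a₁ Λt : ℂ → ℂ) {N : ℕ} (ls : Fin N → ℂ)
    (hls : ∀ j, ls j ∈ D) (hdist : Function.Injective ls)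
    (ha2 : ∀ j k, j ≠ k → af c (ls j - ls k) ≠ 0)
    (ψ : (Fin N → Fin 2) → H)
    (hψ0 : ∀ i, memH0 T D a₁ (ψ i))
    (hψ : ∀ l ∈ D, ∀ s, (∑ t, strTtilMMP c T ls l s t (ψ t)) = Λt l • ψ s)
    (hbae : ∀ j, a₁ (ls j) *
        ∏ k ∈ Finset.univ.erase j, (af c (ls k - ls j) * (af c (ls j - ls k))⁻¹)
      = Λt (ls j)) :
    ∀ l ∈ D, (∀ j, af c (l - ls j) ≠ 0) → (∀ j, af c (ls j - l) ≠ 0) →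
      (-(T l 0 0) - T l 1 1 + T l 2 2) (∑ i, BBrow T ls i (ψ i))
        = (-(a₁ l) * ∏ j, (af c (l - ls j))⁻¹
            - Λt l * ∏ j, (af c (ls j - l))⁻¹) • ∑ i, BBrow T ls i (ψ i) := by
  exact first_level_reduction_general c hc D T hT a₁ Λt ls hls ha2 ψ
    (fun i l hl => (hψ0 i l hl).1) hψ hbae

end Gl12
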